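/- arXiv:2204.05824 — 2 statements merged into one kernel-verified Lean document; each statement's English description precedes it below -/
import Mathlib

section
/- Define g : (1, ∞) → ℝ by g(t) = arccos(1/t) / √(1 − 1/t²). Then for all real numbers s, t with 1 < s < t, one has g(t) − g(s) ≤ (t − s)/3; that is, the derivative of g is bounded above by 1/3 on (1, ∞). -/
open Real

/-- The function `g(t) = arccos(1/t) / √(1 - 1/t²)`. -/
noncomputable def gFun (t : ℝ) : ℝ := Real.arccos (1 / t) / Real.sqrt (1 - 1 / t ^ 2)

/-! Put `u = √(t² - 1)`. For `t > 1` one has `g(t) = t * arctan u / u`, and since `du/dt = t / u`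
and `1 + u² = t²`, differentiating gives `g'(t) = (u - arctan u) / u³`. Thus `g' ≤ 1/3` is the
cubic Taylor bound `u - u³/3 ≤ arctan u` for `u ≥ 0`, which holds because the difference has
derivative `u⁴ / (1 + u²)`. -/

theorem hasDerivAt_arctan_sub_sub_cube_div_three (u : ℝ) :
    HasDerivAt (fun x ↦ arctan x - (x - x ^ 3 / 3)) (u ^ 4 / (1 + u ^ 2)) u := by
  have h_cubic : HasDerivAt (fun x : ℝ ↦ x - x ^ 3 / 3) (1 - u ^ 2) u := by
    refine ((hasDerivAt_id' u).sub ((hasDerivAt_pow 3 u).div_const 3)).congr_deriv ?_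
    push_cast
    ring
  refine ((hasDerivAt_arctan u).sub h_cubic).congr_deriv ?_
  field_simp
  ring

theorem monotone_arctan_sub_sub_cube_div_three :
    Monotone fun u : ℝ ↦ arctan u - (u - u ^ 3 / 3) :=
  monotone_of_hasDerivAt_nonneg hasDerivAt_arctan_sub_sub_cube_div_three fun u ↦ by
    dsimp
    positivity

theorem self_sub_cube_div_three_le_arctan {u : ℝ} (hu : 0 ≤ u) : u - u ^ 3 / 3 ≤ arctan u := by
  simpa using monotone_arctan_sub_sub_cube_div_three hu

theorem sqrt_one_sub_one_div_sq {t : ℝ} (ht : 0 < t) :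
    √(1 - 1 / t ^ 2) = √(t ^ 2 - 1) / t := by
  rw [one_sub_div (by positivity), sqrt_div' _ (by positivity), sqrt_sq ht.le]

theorem arccos_one_div_eq_arctan_sqrt {t : ℝ} (ht : 0 < t) :
    arccos (1 / t) = arctan √(t ^ 2 - 1) := by
  rw [arccos_eq_arctan (by positivity), one_div_pow, sqrt_one_sub_one_div_sq ht,
    div_div_div_cancel_right₀ ht.ne', div_one]

theorem gFun_eq_mul_arctan_div {t : ℝ} (ht : 0 < t) :
    gFun t = t * arctan √(t ^ 2 - 1) / √(t ^ 2 - 1) := by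
  rw [gFun, arccos_one_div_eq_arctan_sqrt ht, sqrt_one_sub_one_div_sq ht, div_div_eq_mul_div,
    mul_comm]

theorem hasDerivAt_sqrt_sq_sub_one {t : ℝ} (ht : t ^ 2 - 1 ≠ 0) :
    HasDerivAt (fun x ↦ √(x ^ 2 - 1)) (t / √(t ^ 2 - 1)) t := by
  refine (((hasDerivAt_pow 2 t).sub_const 1).sqrt ht).congr_deriv ?_
  push_cast
  rw [pow_one, mul_div_mul_left _ _ two_ne_zero]

theorem hasDerivAt_gFun {t : ℝ} (ht : 1 < t) :
    HasDerivAt gFun ((√(t ^ 2 - 1) - arctan √(t ^ 2 - 1)) / √(t ^ 2 - 1) ^ 3) t := by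
  have h_pos : 0 < t ^ 2 - 1 := by nlinarith
  have h_sqrt := hasDerivAt_sqrt_sq_sub_one h_pos.ne'
  have h_sqrt_pos : 0 < √(t ^ 2 - 1) := sqrt_pos.2 h_pos
  have h_one_add_sq : 1 + √(t ^ 2 - 1) ^ 2 = t ^ 2 := by
    rw [sq_sqrt h_pos.le, add_sub_cancel]
  have h_eq : gFun =ᶠ[nhds t] fun x ↦ x * arctan √(x ^ 2 - 1) / √(x ^ 2 - 1) := by
    filter_upwards [lt_mem_nhds (zero_lt_one.trans ht)] with x hx
    exact gFun_eq_mul_arctan_div hx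
  refine HasDerivAt.congr_of_eventuallyEq (HasDerivAt.congr_deriv
    (((hasDerivAt_id' t).fun_mul h_sqrt.arctan).fun_div h_sqrt h_sqrt_pos.ne') ?_) h_eq
  rw [h_one_add_sq]
  generalize √(t ^ 2 - 1) = u at h_sqrt_pos h_one_add_sq ⊢
  field_simp
  rw [← h_one_add_sq]
  ring

theorem deriv_gFun_le_one_third {t : ℝ} (ht : 1 < t) : deriv gFun t ≤ 1 / 3 := by
  have h_sqrt_pos : 0 < √(t ^ 2 - 1) := sqrt_pos.2 (by nlinarith)
  rw [(hasDerivAt_gFun ht).deriv, div_le_iff₀ (by positivity)]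
  linarith [self_sub_cube_div_three_le_arctan h_sqrt_pos.le]

theorem stmt_4 (s t : ℝ) (hs : 1 < s) (hst : s < t) :
    gFun t - gFun s ≤ (t - s) / 3 := by
  have h_diff : DifferentiableOn ℝ gFun (Set.Ioi 1) := fun x hx ↦
    (hasDerivAt_gFun hx).differentiableAt.differentiableWithinAt
  have h_le : gFun t - gFun s ≤ 1 / 3 * (t - s) :=
    (convex_Ioi 1).image_sub_le_mul_sub_of_deriv_le h_diff.continuousOn
      (h_diff.mono interior_subset)
      (fun x hx ↦ deriv_gFun_le_one_third (interior_subset hx))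
      s hs t (hs.trans hst) hst.le
  linarith
end

section
/- Let σ > 0 and let (ℓ_i) and (k_i) be strictly increasing sequences of positive integers with ℓ_i/k_i → σ as i → ∞. Then for every ε > 0 there exists i₀ ∈ ℕ such that for all i ≥ i₀, whenever j is the k_i-th positive zero of J_{ℓ_i} and j′ is the k_i-th positive zero of J_{σ·k_i}, one has (1 − ε) · j′/(σ·k_i) < j/ℓ_i < (1 + ε) · j′/(σ·k_i). -/
open Real Set Filter

/-- The Bessel function of the first kind of order `ν`. -/
noncomputable def besselJ (ν x : ℝ) : ℝ :=
  ∑' m : ℕ, (-1 : ℝ) ^ m / (m.factorial * Real.Gamma (m + ν + 1)) * (x / 2) ^ (2 * (m : ℝ) + ν)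

/-- `j` is the `k`-th positive zero of the Bessel function `J_ν`. -/
def IsKthBesselZero (ν : ℝ) (k : ℕ) (j : ℝ) : Prop :=
  0 < j ∧ besselJ ν j = 0 ∧
    {t : ℝ | t ∈ Set.Ioo 0 j ∧ besselJ ν t = 0}.encard = (k - 1 : ℕ)

/-!
Write `j_{ν,k}` for the `k`-th positive zero of `J_ν`. In the variable `x = c * exp (q * t)`,
Bessel's equation loses its first-order term and becomes `u'' + q ^ 2 * (x ^ 2 - ν ^ 2) * u = 0`,
and for `0 ≤ ν` the Wronskian of two such solutions tends to `0` as `t → -∞`. Sturm's comparison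
theorem therefore holds on the whole half-line below a zero and compares zeros of the same rank `k`.

Taking `q = 1` it shows that `j_{ν,k}` increases with `ν`. Taking `q = 1 / ν`, where the potential
is `(x / ν) ^ 2 - 1`, it shows that `j_{ν,k} / ν` decreases with `ν`. Hence `j_{ν,k} / ν` lies
between `j_{μ,k} / ν` and `j_{μ,k} / μ` for all positive `μ` and `ν`, and it is asymptotic to
`j_{μ,k} / μ`, uniformly in `k`, as soon as `ν / μ → 1`. In the theorem, `ν = ℓ_i` and
`μ = σ * k_i`.
-/

section PowerSeries

open scoped Nat

variable {𝕜 : Type*} [RCLike 𝕜] {a : ℕ → 𝕜} {C : ℝ}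

lemma summable_mul_pow_of_norm_le_div_factorial (ha : ∀ m, ‖a m‖ ≤ C / m !) (z : 𝕜) :
    Summable fun m => a m * z ^ m := by
  refine .of_norm_bounded ((Real.summable_pow_div_factorial ‖z‖).mul_left C) fun m => ?_
  calc ‖a m * z ^ m‖ = ‖a m‖ * ‖z‖ ^ m := by rw [norm_mul, norm_pow]
    _ ≤ C / m ! * ‖z‖ ^ m := by gcongr; exact ha m
    _ = C * (‖z‖ ^ m / m !) := by ring

lemma summable_mul_pow_pred_div_factorial (r : ℝ) :
    Summable fun m : ℕ => m * r ^ (m - 1) / m ! := by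
  rw [← summable_nat_add_iff 1]
  refine (Real.summable_pow_div_factorial r).congr fun m => ?_
  rw [Nat.factorial_succ, Nat.cast_mul, Nat.add_sub_cancel,
    mul_div_mul_left _ _ (Nat.cast_ne_zero.2 m.succ_ne_zero)]

lemma hasDerivAt_tsum_mul_pow_of_norm_le_div_factorial (ha : ∀ m, ‖a m‖ ≤ C / m !) (z : 𝕜) :
    HasDerivAt (fun w => ∑' m, a m * w ^ m) (∑' m : ℕ, (m + 1) * a (m + 1) * z ^ m) z := by
  set r := ‖z‖ + 1
  have hbound : ∀ m, ∀ w ∈ Metric.ball (0 : 𝕜) r,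
      ‖a m * (m * w ^ (m - 1))‖ ≤ C * (m * r ^ (m - 1) / m !) := fun m w hw => by
    have hw : ‖w‖ ≤ r := (mem_ball_zero_iff.1 hw).le
    calc ‖a m * (m * w ^ (m - 1))‖ = ‖a m‖ * (m * ‖w‖ ^ (m - 1)) := by
          rw [norm_mul, norm_mul, norm_pow, RCLike.norm_natCast]
      _ ≤ C / m ! * (m * r ^ (m - 1)) := by gcongr; exacts [(norm_nonneg _).trans (ha m), ha m]
      _ = C * (m * r ^ (m - 1) / m !) := by ring
  have hsum := (summable_mul_pow_pred_div_factorial r).mul_left C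
  have hz : z ∈ Metric.ball (0 : 𝕜) r := by simp [r]
  have hderiv := hasDerivAt_tsum_of_isPreconnected hsum Metric.isOpen_ball
    (convex_ball (0 : 𝕜) r).isPreconnected (fun m w _ => (hasDerivAt_pow m w).const_mul (a m))
    hbound hz (summable_mul_pow_of_norm_le_div_factorial ha z) hz
  refine hderiv.congr_deriv ?_
  rw [(Summable.of_norm_bounded hsum fun m => hbound m z hz).tsum_eq_zero_add]
  simp only [Nat.cast_zero, zero_mul, mul_zero, zero_add, Nat.cast_add, Nat.cast_one,
    Nat.add_sub_cancel]
  exact tsum_congr fun m => by ring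

end PowerSeries

section BesselClifford

open scoped Nat

lemma inv_Gamma_eq_mul_inv_Gamma_add_one (s : ℝ) : (Gamma s)⁻¹ = s * (Gamma (s + 1))⁻¹ := by
  rcases eq_or_ne s 0 with rfl | hs
  · simp [Gamma_zero]
  · rw [Gamma_add_one hs, mul_inv, mul_inv_cancel_left₀ hs]

lemma exists_abs_inv_Gamma_natCast_add_le (s : ℝ) :
    ∃ C, ∀ m : ℕ, |(Gamma (m + s))⁻¹| ≤ C := by
  have hle : ∀ᶠ m : ℕ in atTop, |(Gamma (m + s))⁻¹| ≤ 1 := by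
    have hlarge : Tendsto (fun m : ℕ => (m : ℝ) + s) atTop atTop :=
      tendsto_atTop_add_const_right _ _ tendsto_natCast_atTop_atTop
    filter_upwards [hlarge.eventually_ge_atTop 2] with m hm
    have hΓ : 1 ≤ Gamma (m + s) :=
      Gamma_two ▸ Gamma_strictMonoOn_Ici.monotoneOn self_mem_Ici hm hm
    rw [abs_of_nonneg (by positivity)]
    exact inv_le_one_of_one_le₀ hΓ
  obtain ⟨C, hC⟩ := (isBoundedUnder_of_eventually_le hle).bddAbove_range
  exact ⟨C, fun m => hC (mem_range_self m)⟩

/-- The `m`-th Taylor coefficient of the Bessel–Clifford function of order `ν`. At a pole of `Γ`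
the convention `1 / 0 = 0` gives the value of the entire function `1 / Γ`, so that the recurrences
below hold for every real order. -/
noncomputable def besselCliffordCoeff (ν : ℝ) (m : ℕ) : ℝ :=
  (m ! * Gamma (m + ν + 1))⁻¹

/-- The Bessel–Clifford function of order `ν`, the entire function `C_ν` for which
`J_ν(x) = (x / 2) ^ ν * C_ν(-(x / 2) ^ 2)`. -/
noncomputable def besselClifford (ν z : ℝ) : ℝ :=
  ∑' m, besselCliffordCoeff ν m * z ^ m

lemma exists_norm_besselCliffordCoeff_le (ν : ℝ) :
    ∃ C, ∀ m, ‖besselCliffordCoeff ν m‖ ≤ C / m ! := by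
  obtain ⟨C, hC⟩ := exists_abs_inv_Gamma_natCast_add_le (ν + 1)
  refine ⟨C, fun m => ?_⟩
  rw [besselCliffordCoeff, mul_inv, norm_mul, norm_inv, RCLike.norm_natCast, mul_comm,
    ← div_eq_mul_inv, add_assoc]
  gcongr
  exact hC m

lemma summable_besselClifford (ν z : ℝ) : Summable fun m => besselCliffordCoeff ν m * z ^ m :=
  have ⟨_, hC⟩ := exists_norm_besselCliffordCoeff_le ν
  summable_mul_pow_of_norm_le_div_factorial hC z

lemma add_one_mul_besselCliffordCoeff_add_one (ν : ℝ) (m : ℕ) :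
    (m + 1) * besselCliffordCoeff ν (m + 1) = besselCliffordCoeff (ν + 1) m := by
  have hm : (m + 1 : ℝ) ≠ 0 := by positivity
  rw [besselCliffordCoeff, besselCliffordCoeff, Nat.factorial_succ, Nat.cast_mul, mul_assoc,
    mul_inv, Nat.cast_succ, mul_inv_cancel_left₀ hm]
  ring_nf

lemma besselCliffordCoeff_eq_mul_order_add_one (ν : ℝ) (m : ℕ) :
    besselCliffordCoeff ν m = (m + ν + 1) * besselCliffordCoeff (ν + 1) m := by
  rw [besselCliffordCoeff, besselCliffordCoeff, mul_inv, inv_Gamma_eq_mul_inv_Gamma_add_one,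
    mul_inv]
  ring_nf

lemma hasDerivAt_besselClifford (ν z : ℝ) :
    HasDerivAt (besselClifford ν) (besselClifford (ν + 1) z) z := by
  obtain ⟨C, hC⟩ := exists_norm_besselCliffordCoeff_le ν
  refine (hasDerivAt_tsum_mul_pow_of_norm_le_div_factorial hC z).congr_deriv ?_
  simp only [add_one_mul_besselCliffordCoeff_add_one, besselClifford]

lemma besselClifford_eq_add (ν z : ℝ) :
    besselClifford ν z = (ν + 1) * besselClifford (ν + 1) z + z * besselClifford (ν + 2) z := by
  have hshift (m : ℕ) : ((m + 1 : ℕ) : ℝ) * (besselCliffordCoeff (ν + 1) (m + 1) * z ^ (m + 1))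
      = z * (besselCliffordCoeff (ν + 2) m * z ^ m) := by
    have hcoeff := add_one_mul_besselCliffordCoeff_add_one (ν + 1) m
    rw [add_assoc ν, one_add_one_eq_two] at hcoeff
    rw [← hcoeff]
    push_cast
    ring
  have hsum : Summable fun m : ℕ => (m : ℝ) * (besselCliffordCoeff (ν + 1) m * z ^ m) := by
    rw [← summable_nat_add_iff 1]
    exact ((summable_besselClifford (ν + 2) z).mul_left z).congr fun m => (hshift m).symm
  have hsplit (m : ℕ) : besselCliffordCoeff ν m * z ^ m
      = (ν + 1) * (besselCliffordCoeff (ν + 1) m * z ^ m)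
        + m * (besselCliffordCoeff (ν + 1) m * z ^ m) := by
    rw [besselCliffordCoeff_eq_mul_order_add_one]
    ring
  calc besselClifford ν z
      = (ν + 1) * besselClifford (ν + 1) z
        + ∑' m : ℕ, (m : ℝ) * (besselCliffordCoeff (ν + 1) m * z ^ m) := by
        rw [besselClifford, tsum_congr hsplit,
          ((summable_besselClifford (ν + 1) z).mul_left _).tsum_add hsum, tsum_mul_left]
        rfl
    _ = (ν + 1) * besselClifford (ν + 1) z + z * besselClifford (ν + 2) z := by
        rw [hsum.tsum_eq_zero_add, tsum_congr hshift, tsum_mul_left, Nat.cast_zero, zero_mul,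
          zero_add]
        rfl

end BesselClifford

section BesselEquation

open scoped Topology

variable {ν x : ℝ}

lemma besselJ_eq_rpow_mul_besselClifford (ν : ℝ) (hx : 0 < x) :
    besselJ ν x = (x / 2) ^ ν * besselClifford ν (-(x / 2) ^ 2) := by
  rw [besselJ, besselClifford, ← tsum_mul_left]
  refine tsum_congr fun m => ?_
  have hpow : (x / 2) ^ (2 * (m : ℝ) + ν) = (x / 2) ^ ν * ((x / 2) ^ 2) ^ m := by
    rw [add_comm, ← Nat.cast_ofNat, ← Nat.cast_mul, rpow_add_natCast (by positivity), pow_mul]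
  rw [besselCliffordCoeff, hpow, neg_pow ((x / 2) ^ 2)]
  ring

/-- The Euler derivative `x J_ν'(x)` of the Bessel function, expressed through `J_{ν+1}`. -/
noncomputable def besselJEuler (ν x : ℝ) : ℝ :=
  ν * besselJ ν x - x * besselJ (ν + 1) x

lemma hasDerivAt_besselJ (ν : ℝ) (hx : 0 < x) :
    HasDerivAt (besselJ ν) (besselJEuler ν x / x) x := by
  have hhalf : HasDerivAt (fun y : ℝ => y / 2) (1 / 2) x := (hasDerivAt_id x).div_const 2
  have hprod := (hhalf.rpow_const (p := ν) (.inl (by positivity))).mul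
    ((hasDerivAt_besselClifford ν _).comp x (hhalf.pow 2).neg)
  refine (hprod.congr_of_eventuallyEq ?_).congr_deriv ?_
  · filter_upwards [lt_mem_nhds hx] with y hy using besselJ_eq_rpow_mul_besselClifford ν hy
  · simp only [besselJEuler, besselJ_eq_rpow_mul_besselClifford _ hx, Function.comp_apply,
      Pi.neg_apply, Pi.pow_apply, rpow_sub_one (half_pos hx).ne', rpow_add_one (half_pos hx).ne']
    field_simp
    ring

lemma besselJ_add_besselJ_add_two (ν : ℝ) (hx : 0 < x) :
    x * (besselJ ν x + besselJ (ν + 2) x) = 2 * (ν + 1) * besselJ (ν + 1) x := by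
  have hrpow : (x / 2) ^ (ν + 2) = (x / 2) ^ ν * (x / 2) ^ 2 := by
    exact_mod_cast rpow_add_natCast (half_pos hx).ne' ν 2
  simp only [besselJ_eq_rpow_mul_besselClifford _ hx, besselClifford_eq_add ν, hrpow,
    rpow_add_one (half_pos hx).ne']
  ring

lemma hasDerivAt_besselJEuler (ν : ℝ) (hx : 0 < x) :
    HasDerivAt (besselJEuler ν) ((ν ^ 2 - x ^ 2) * besselJ ν x / x) x := by
  have hderiv := ((hasDerivAt_besselJ ν hx).const_mul ν).sub
    ((hasDerivAt_id x).mul (hasDerivAt_besselJ (ν + 1) hx))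
  refine hderiv.congr_deriv ?_
  have hrec := besselJ_add_besselJ_add_two ν hx
  rw [← one_add_one_eq_two, ← add_assoc] at hrec
  simp only [besselJEuler, id]
  field_simp
  linear_combination x * hrec

lemma tendsto_besselJ_nhdsGT_zero (hν : 0 ≤ ν) :
    Tendsto (besselJ ν) (𝓝[>] 0) (𝓝 (0 ^ ν * besselClifford ν 0)) := by
  have hcont : ContinuousAt (fun x : ℝ => (x / 2) ^ ν * besselClifford ν (-(x / 2) ^ 2)) 0 := by
    have hhalf : ContinuousAt (fun x : ℝ => x / 2) 0 := by fun_prop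
    exact (hhalf.rpow_const (.inr hν)).mul
      ((hasDerivAt_besselClifford ν _).continuousAt.comp (hhalf.pow 2).neg)
  have hlim := hcont.tendsto.mono_left (nhdsWithin_le_nhds (s := Ioi 0))
  simp only [zero_div, zero_pow two_ne_zero, neg_zero] at hlim
  refine hlim.congr' ?_
  filter_upwards [self_mem_nhdsWithin] with x hx
  exact (besselJ_eq_rpow_mul_besselClifford ν hx).symm

lemma tendsto_besselJEuler_nhdsGT_zero (hν : 0 ≤ ν) :
    Tendsto (besselJEuler ν) (𝓝[>] 0) (𝓝 0) := by
  have hid : Tendsto (fun x : ℝ => x) (𝓝[>] 0) (𝓝 0) := nhdsWithin_le_nhds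
  have hlim := ((tendsto_besselJ_nhdsGT_zero hν).const_mul ν).sub
    (hid.mul (tendsto_besselJ_nhdsGT_zero (add_nonneg hν zero_le_one)))
  have hzero : ν * 0 ^ ν = 0 := by
    rcases eq_or_ne ν 0 with rfl | hν
    · exact zero_mul _
    · rw [zero_rpow hν, mul_zero]
  simp only [← mul_assoc, hzero, zero_mul, sub_zero] at hlim
  exact hlim

end BesselEquation

section SturmComparison

open scoped Topology

lemma deriv_nonpos_of_nonneg_left {u : ℝ → ℝ} {u' b : ℝ} (hu : HasDerivAt u u' b) (hb : u b = 0)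
    (hnonneg : ∀ᶠ t in 𝓝[<] b, 0 ≤ u t) : u' ≤ 0 := by
  refine le_of_tendsto (hasDerivAt_iff_tendsto_slope_left_right.1 hu).1 ?_
  filter_upwards [hnonneg, self_mem_nhdsWithin] with t ht htb
  rw [slope_def_field, hb, sub_zero]
  exact div_nonpos_of_nonneg_of_nonpos ht (sub_nonpos.2 (le_of_lt htb))

lemma deriv_nonneg_of_nonneg_right {u : ℝ → ℝ} {u' a : ℝ} (hu : HasDerivAt u u' a) (ha : u a = 0)
    (hnonneg : ∀ᶠ t in 𝓝[>] a, 0 ≤ u t) : 0 ≤ u' := by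
  refine ge_of_tendsto (hasDerivAt_iff_tendsto_slope_left_right.1 hu).2 ?_
  filter_upwards [hnonneg, self_mem_nhdsWithin] with t ht hta
  rw [slope_def_field, ha, sub_zero]
  exact div_nonneg ht (sub_nonneg.2 (le_of_lt hta))

lemma exists_forall_mem_pos_mul_of_ne_zero {X : Type*} [TopologicalSpace X] {u : X → ℝ}
    {s : Set X} (hs : IsPreconnected s) (hu : ContinuousOn u s) (hne : ∀ t ∈ s, u t ≠ 0) :
    ∃ c, ∀ t ∈ s, 0 < c * u t := by
  rcases s.eq_empty_or_nonempty with rfl | ⟨a, ha⟩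
  · exact ⟨0, by simp⟩
  · refine ⟨u a, fun t ht => ?_⟩
    have hconn := (hs.image u hu).ordConnected.uIcc_subset (mem_image_of_mem u ha)
      (mem_image_of_mem u ht)
    by_contra! hneg
    obtain ⟨x, hx, hx0⟩ : (0 : ℝ) ∈ u '' s := by
      refine hconn (mem_uIcc.2 ?_)
      rcases mul_nonpos_iff.1 hneg with h | h
      exacts [.inr h.symm, .inl h]
    exact hne x hx hx0

/-- `u` solves the equation `u'' + Q u = 0` on the real line. The derivative `v` of `u` is carried
along, so that the equation reads as a first-order system. -/
structure IsSturmSolution (Q u v : ℝ → ℝ) : Prop where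
  hasDerivAt : ∀ t, HasDerivAt u (v t) t
  hasDerivAt_deriv : ∀ t, HasDerivAt v (-(Q t * u t)) t

/-- The Wronskian `u₁ u₂' - u₁' u₂` of two functions `u₁`, `u₂` with derivatives `v₁`, `v₂`. -/
def wronskian (u₁ v₁ u₂ v₂ : ℝ → ℝ) (t : ℝ) : ℝ :=
  u₁ t * v₂ t - v₁ t * u₂ t

lemma wronskian_const_mul (c₁ c₂ : ℝ) (u₁ v₁ u₂ v₂ : ℝ → ℝ) :
    wronskian (fun t => c₁ * u₁ t) (fun t => c₁ * v₁ t) (fun t => c₂ * u₂ t) (fun t => c₂ * v₂ t)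
      = fun t => c₁ * c₂ * wronskian u₁ v₁ u₂ v₂ t := by
  ext t
  simp only [wronskian]
  ring

namespace IsSturmSolution

variable {Q Q₁ Q₂ u v u₁ v₁ u₂ v₂ : ℝ → ℝ} {s : Set ℝ} {a b : ℝ}

lemma continuous (h : IsSturmSolution Q u v) : Continuous u :=
  continuous_iff_continuousAt.2 fun t => (h.hasDerivAt t).continuousAt

lemma const_mul (c : ℝ) (h : IsSturmSolution Q u v) :
    IsSturmSolution Q (fun t => c * u t) (fun t => c * v t) where
  hasDerivAt t := (h.hasDerivAt t).const_mul c
  hasDerivAt_deriv t := ((h.hasDerivAt_deriv t).const_mul c).congr_deriv (by ring)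

lemma hasDerivAt_wronskian (h₁ : IsSturmSolution Q₁ u₁ v₁)
    (h₂ : IsSturmSolution Q₂ u₂ v₂) (t : ℝ) :
    HasDerivAt (wronskian u₁ v₁ u₂ v₂) ((Q₁ t - Q₂ t) * (u₁ t * u₂ t)) t :=
  (((h₁.hasDerivAt t).mul (h₂.hasDerivAt_deriv t)).sub
    ((h₁.hasDerivAt_deriv t).mul (h₂.hasDerivAt t))).congr_deriv (by ring)

lemma strictMonoOn_wronskian (h₁ : IsSturmSolution Q₁ u₁ v₁)
    (h₂ : IsSturmSolution Q₂ u₂ v₂) (hs : Convex ℝ s) (hQ : ∀ t ∈ interior s, Q₁ t < Q₂ t)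
    (hu₁ : ∀ t ∈ interior s, 0 < u₁ t) (hu₂ : ∀ t ∈ interior s, 0 < u₂ t) :
    StrictMonoOn (wronskian u₂ v₂ u₁ v₁) s := by
  have hderiv := h₂.hasDerivAt_wronskian h₁
  refine strictMonoOn_of_deriv_pos hs (fun t _ => (hderiv t).continuousAt.continuousWithinAt)
    fun t ht => ?_
  rw [(hderiv t).deriv]
  exact mul_pos (sub_pos.2 (hQ t ht)) (mul_pos (hu₂ t ht) (hu₁ t ht))

lemma wronskian_nonpos_of_nonneg_left (h₁ : IsSturmSolution Q₁ u₁ v₁)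
    (h₂ : IsSturmSolution Q₂ u₂ v₂) (hb : u₁ b = 0) (hu₁ : ∀ᶠ t in 𝓝[<] b, 0 ≤ u₁ t)
    (hu₂ : ∀ᶠ t in 𝓝[<] b, 0 ≤ u₂ t) : wronskian u₂ v₂ u₁ v₁ b ≤ 0 := by
  have hv₁ := deriv_nonpos_of_nonneg_left (h₁.hasDerivAt b) hb hu₁
  have hu₂b : 0 ≤ u₂ b := ge_of_tendsto h₂.continuous.continuousWithinAt.tendsto hu₂
  rw [wronskian, hb, mul_zero, sub_zero]
  exact mul_nonpos_of_nonneg_of_nonpos hu₂b hv₁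

lemma wronskian_nonneg_of_nonneg_right (h₁ : IsSturmSolution Q₁ u₁ v₁)
    (h₂ : IsSturmSolution Q₂ u₂ v₂) (ha : u₁ a = 0) (hu₁ : ∀ᶠ t in 𝓝[>] a, 0 ≤ u₁ t)
    (hu₂ : ∀ᶠ t in 𝓝[>] a, 0 ≤ u₂ t) : 0 ≤ wronskian u₂ v₂ u₁ v₁ a := by
  have hv₁ := deriv_nonneg_of_nonneg_right (h₁.hasDerivAt a) ha hu₁
  have hu₂a : 0 ≤ u₂ a := ge_of_tendsto h₂.continuous.continuousWithinAt.tendsto hu₂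
  rw [wronskian, ha, mul_zero, sub_zero]
  exact mul_nonneg hu₂a hv₁

lemma not_forall_pos_Ioo (h₁ : IsSturmSolution Q₁ u₁ v₁)
    (h₂ : IsSturmSolution Q₂ u₂ v₂) (hab : a < b) (hQ : ∀ t ∈ Ioo a b, Q₁ t < Q₂ t) (ha : u₁ a = 0)
    (hb : u₁ b = 0) (hu₁ : ∀ t ∈ Ioo a b, 0 < u₁ t) : ¬ ∀ t ∈ Ioo a b, 0 < u₂ t := by
  intro hu₂
  have hmono : StrictMonoOn (wronskian u₂ v₂ u₁ v₁) (Icc a b) :=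
    h₁.strictMonoOn_wronskian h₂ (convex_Icc a b) (by rwa [interior_Icc]) (by rwa [interior_Icc])
      (by rwa [interior_Icc])
  have hleft : 0 ≤ wronskian u₂ v₂ u₁ v₁ a := by
    apply h₁.wronskian_nonneg_of_nonneg_right h₂ ha <;>
      filter_upwards [Ioo_mem_nhdsGT hab] with t ht
    exacts [(hu₁ t ht).le, (hu₂ t ht).le]
  have hright : wronskian u₂ v₂ u₁ v₁ b ≤ 0 := by
    apply h₁.wronskian_nonpos_of_nonneg_left h₂ hb <;>
      filter_upwards [Ioo_mem_nhdsLT hab] with t ht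
    exacts [(hu₁ t ht).le, (hu₂ t ht).le]
  exact (hmono (left_mem_Icc.2 hab.le) (right_mem_Icc.2 hab.le) hab).not_ge (hright.trans hleft)

lemma not_forall_pos_Iio (h₁ : IsSturmSolution Q₁ u₁ v₁)
    (h₂ : IsSturmSolution Q₂ u₂ v₂) (hQ : ∀ t < b, Q₁ t < Q₂ t) (hb : u₁ b = 0)
    (hW : Tendsto (wronskian u₂ v₂ u₁ v₁) atBot (𝓝 0)) (hu₁ : ∀ t < b, 0 < u₁ t) :
    ¬ ∀ t < b, 0 < u₂ t := by
  intro hu₂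
  have hmono : StrictMonoOn (wronskian u₂ v₂ u₁ v₁) (Iic b) :=
    h₁.strictMonoOn_wronskian h₂ (convex_Iic b) (by rwa [interior_Iic]) (by rwa [interior_Iic])
      (by rwa [interior_Iic])
  have hpos (t : ℝ) (ht : t < b) : 0 ≤ wronskian u₂ v₂ u₁ v₁ t := by
    refine le_of_tendsto hW ?_
    filter_upwards [Iic_mem_atBot t] with r hr
    exact hmono.monotoneOn (hr.trans ht.le) ht.le hr
  have hright : wronskian u₂ v₂ u₁ v₁ b ≤ 0 := by
    apply h₁.wronskian_nonpos_of_nonneg_left h₂ hb <;>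
      filter_upwards [self_mem_nhdsWithin] with t ht
    exacts [(hu₁ t ht).le, (hu₂ t ht).le]
  have hlt : wronskian u₂ v₂ u₁ v₁ (b - 1) < wronskian u₂ v₂ u₁ v₁ b :=
    hmono (sub_one_lt b).le (mem_Iic.2 le_rfl) (sub_one_lt b)
  exact hlt.not_ge (hright.trans (hpos _ (sub_one_lt b)))

theorem exists_zero_Ioo (h₁ : IsSturmSolution Q₁ u₁ v₁)
    (h₂ : IsSturmSolution Q₂ u₂ v₂) (hab : a < b) (hQ : ∀ t ∈ Ioo a b, Q₁ t < Q₂ t) (ha : u₁ a = 0)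
    (hb : u₁ b = 0) (hne : ∀ t ∈ Ioo a b, u₁ t ≠ 0) : ∃ z ∈ Ioo a b, u₂ z = 0 := by
  by_contra! hne₂
  obtain ⟨c₁, hc₁⟩ := exists_forall_mem_pos_mul_of_ne_zero isPreconnected_Ioo
    h₁.continuous.continuousOn hne
  obtain ⟨c₂, hc₂⟩ := exists_forall_mem_pos_mul_of_ne_zero isPreconnected_Ioo
    h₂.continuous.continuousOn hne₂
  exact (h₁.const_mul c₁).not_forall_pos_Ioo (h₂.const_mul c₂) hab hQ (by simp [ha]) (by simp [hb])
    hc₁ hc₂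

theorem exists_zero_Iio (h₁ : IsSturmSolution Q₁ u₁ v₁)
    (h₂ : IsSturmSolution Q₂ u₂ v₂) (hQ : ∀ t < b, Q₁ t < Q₂ t) (hb : u₁ b = 0)
    (hW : Tendsto (wronskian u₂ v₂ u₁ v₁) atBot (𝓝 0)) (hne : ∀ t < b, u₁ t ≠ 0) :
    ∃ z < b, u₂ z = 0 := by
  by_contra! hne₂
  obtain ⟨c₁, hc₁⟩ := exists_forall_mem_pos_mul_of_ne_zero isPreconnected_Iio
    h₁.continuous.continuousOn hne
  obtain ⟨c₂, hc₂⟩ := exists_forall_mem_pos_mul_of_ne_zero isPreconnected_Iio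
    h₂.continuous.continuousOn hne₂
  refine (h₁.const_mul c₁).not_forall_pos_Iio (h₂.const_mul c₂) hQ (by simp [hb]) ?_ hc₁ hc₂
  rw [wronskian_const_mul]
  simpa only [mul_zero] using hW.const_mul (c₂ * c₁)

lemma exists_zero_lt_forall_Ico_ne_zero (h₁ : IsSturmSolution Q₁ u₁ v₁)
    (h₂ : IsSturmSolution Q₂ u₂ v₂) (hQ : ∀ t < b, Q₁ t < Q₂ t) (hb : u₁ b = 0)
    (hW : Tendsto (wronskian u₂ v₂ u₁ v₁) atBot (𝓝 0)) (hfin : {t | t < b ∧ u₁ t = 0}.Finite) :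
    ∃ z < b, u₂ z = 0 ∧ ∀ t ∈ Ico z b, u₁ t ≠ 0 := by
  rcases {t | t < b ∧ u₁ t = 0}.eq_empty_or_nonempty with hempty | hnonempty
  · have hne (t : ℝ) (ht : t < b) : u₁ t ≠ 0 := fun h0 => hempty.subset ⟨ht, h0⟩
    obtain ⟨z, hzb, hz⟩ := h₁.exists_zero_Iio h₂ hQ hb hW hne
    exact ⟨z, hzb, hz, fun t ht => hne t ht.2⟩
  · obtain ⟨a, ⟨hab, ha⟩, hmax⟩ := hfin.exists_maximal hnonempty
    have hne (t : ℝ) (ht : t ∈ Ioo a b) : u₁ t ≠ 0 := fun h0 =>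
      ht.1.not_ge (hmax ⟨ht.2, h0⟩ ht.1.le)
    obtain ⟨z, ⟨haz, hzb⟩, hz⟩ := h₁.exists_zero_Ioo h₂ hab (fun t ht => hQ t ht.2) ha hb hne
    exact ⟨z, hzb, hz, fun t ht => hne t ⟨haz.trans_le ht.1, ht.2⟩⟩

theorem encard_zeros_Iic_le_encard_zeros_Iio (h₁ : IsSturmSolution Q₁ u₁ v₁)
    (h₂ : IsSturmSolution Q₂ u₂ v₂) (hQ : ∀ t < b, Q₁ t < Q₂ t)
    (hW : Tendsto (wronskian u₂ v₂ u₁ v₁) atBot (𝓝 0)) (hfin : {t | t < b ∧ u₁ t = 0}.Finite) :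
    {t | t ≤ b ∧ u₁ t = 0}.encard ≤ {t | t < b ∧ u₂ t = 0}.encard := by
  have hzero : ∀ s ∈ {t | t ≤ b ∧ u₁ t = 0}, ∃ z < s, u₂ z = 0 ∧ ∀ t ∈ Ico z s, u₁ t ≠ 0 :=
    fun s ⟨hsb, hs⟩ => h₁.exists_zero_lt_forall_Ico_ne_zero h₂ (fun t ht => hQ t (ht.trans_le hsb))
      hs hW (hfin.subset fun t ht => ⟨ht.1.trans_le hsb, ht.2⟩)
  choose! f hf_lt hf_zero hf_ne using hzero
  have hf_mono : StrictMonoOn f {t | t ≤ b ∧ u₁ t = 0} := fun s hs s' hs' hss' =>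
    (hf_lt s hs).trans <| lt_of_not_ge fun hle => hf_ne s' hs' s ⟨hle, hss'⟩ hs.2
  exact encard_le_encard_of_injOn (fun s hs => ⟨(hf_lt s hs).trans_le hs.1, hf_zero s hs⟩)
    hf_mono.injOn

end IsSturmSolution

end SturmComparison

section LogarithmicVariable

open scoped Topology

variable {ν μ q p c d : ℝ}

lemma isSturmSolution_besselJ_comp_exp (ν q : ℝ) (hc : 0 < c) :
    IsSturmSolution (fun t => q ^ 2 * ((c * exp (q * t)) ^ 2 - ν ^ 2))
      (fun t => besselJ ν (c * exp (q * t))) (fun t => q * besselJEuler ν (c * exp (q * t))) := by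
  have hpos (t : ℝ) : 0 < c * exp (q * t) := by positivity
  have hexp (t : ℝ) : HasDerivAt (fun t => c * exp (q * t)) (q * (c * exp (q * t))) t := by
    refine ((((hasDerivAt_id t).const_mul q).exp).const_mul c).congr_deriv ?_
    simp only [id, mul_one]
    ring
  constructor <;> intro t
  · refine ((hasDerivAt_besselJ ν (hpos t)).comp t (hexp t)).congr_deriv ?_
    field [(hpos t).ne']
  · refine (((hasDerivAt_besselJEuler ν (hpos t)).comp t (hexp t)).const_mul q).congr_deriv ?_
    field [(hpos t).ne']

lemma tendsto_const_mul_exp_atBot (hq : 0 < q) (hc : 0 < c) :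
    Tendsto (fun t => c * exp (q * t)) atBot (𝓝[>] 0) := by
  refine tendsto_nhdsWithin_iff.2 ⟨?_, .of_forall fun t => mem_Ioi.2 (by positivity)⟩
  have hlim := (tendsto_exp_atBot.comp (tendsto_id.const_mul_atBot hq)).const_mul c
  rwa [mul_zero] at hlim

lemma tendsto_wronskian_besselJ_comp_exp_atBot (hμ : 0 ≤ μ) (hν : 0 ≤ ν) (hp : 0 < p) (hq : 0 < q)
    (hd : 0 < d) (hc : 0 < c) :
    Tendsto (wronskian
      (fun t => besselJ μ (d * exp (p * t))) (fun t => p * besselJEuler μ (d * exp (p * t)))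
      (fun t => besselJ ν (c * exp (q * t))) (fun t => q * besselJEuler ν (c * exp (q * t))))
      atBot (𝓝 0) := by
  have hx := tendsto_const_mul_exp_atBot hp hd
  have hy := tendsto_const_mul_exp_atBot hq hc
  have hlim :=
    (((tendsto_besselJ_nhdsGT_zero hμ).comp hx).mul
      (((tendsto_besselJEuler_nhdsGT_zero hν).comp hy).const_mul q)).sub
    ((((tendsto_besselJEuler_nhdsGT_zero hμ).comp hx).const_mul p).mul
      ((tendsto_besselJ_nhdsGT_zero hν).comp hy))
  simp only [mul_zero, zero_mul, sub_zero] at hlim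
  exact hlim

lemma encard_preimage_const_mul_exp (hc : 0 < c) (hq : q ≠ 0) {S : Set ℝ} (hS : S ⊆ Ioi 0) :
    ((fun t => c * exp (q * t)) ⁻¹' S).encard = S.encard := by
  refine encard_preimage_of_injective_subset_range (fun s t hst => ?_) fun x hx => ?_
  · exact mul_left_cancel₀ hq (exp_injective (mul_left_cancel₀ hc.ne' hst))
  · refine ⟨log (x / c) / q, ?_⟩
    simp only [mul_div_cancel₀ _ hq, exp_log (div_pos (hS hx) hc), mul_div_cancel₀ _ hc.ne']

lemma encard_zeros_Iic_besselJ_comp_exp (ν : ℝ) (hc : 0 < c) (hq : 0 < q) :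
    {t | t ≤ 0 ∧ besselJ ν (c * exp (q * t)) = 0}.encard
      = {x | x ∈ Ioc 0 c ∧ besselJ ν x = 0}.encard := by
  rw [← encard_preimage_const_mul_exp (S := {x | x ∈ Ioc 0 c ∧ besselJ ν x = 0}) hc hq.ne'
    fun x hx => hx.1.1]
  congr with t
  have hle : c * exp (q * t) ≤ c ↔ t ≤ 0 := by
    rw [mul_le_iff_le_one_right hc, exp_le_one_iff, ← smul_eq_mul,
      smul_nonpos_iff_nonpos_of_pos_left hq]
  have hpos : 0 < c * exp (q * t) := by positivity
  simp only [mem_ofPred_eq, mem_Ioc, hle, hpos, true_and]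

lemma encard_zeros_Iio_besselJ_comp_exp (ν : ℝ) (hc : 0 < c) (hq : 0 < q) :
    {t | t < 0 ∧ besselJ ν (c * exp (q * t)) = 0}.encard
      = {x | x ∈ Ioo 0 c ∧ besselJ ν x = 0}.encard := by
  rw [← encard_preimage_const_mul_exp (S := {x | x ∈ Ioo 0 c ∧ besselJ ν x = 0}) hc hq.ne'
    fun x hx => hx.1.1]
  congr with t
  have hlt : c * exp (q * t) < c ↔ t < 0 := by
    rw [mul_lt_iff_lt_one_right hc, exp_lt_one_iff, ← smul_eq_mul, smul_neg_iff_of_pos_left hq]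
  have hpos : 0 < c * exp (q * t) := by positivity
  simp only [mem_ofPred_eq, mem_Ioo, hlt, hpos, true_and]

end LogarithmicVariable

namespace IsKthBesselZero

variable {ν μ j j' : ℝ} {k : ℕ}

lemma encard_zeros_Ioc (h : IsKthBesselZero ν k j) :
    {t | t ∈ Ioc 0 j ∧ besselJ ν t = 0}.encard = (k - 1 : ℕ) + 1 := by
  obtain ⟨hj0, hj, hcard⟩ := h
  rw [← hcard, ← encard_insert_of_notMem (a := j) (by simp)]
  congr 1
  ext t
  simp only [mem_ofPred_eq, mem_insert_iff, mem_Ioc, mem_Ioo, le_iff_lt_or_eq]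
  grind

lemma lt_of_encard_zeros_le {x : ℝ} (hj : IsKthBesselZero ν k j) (hj' : IsKthBesselZero μ k j')
    (hle : {t | t ∈ Ioc 0 j ∧ besselJ ν t = 0}.encard
      ≤ {t | t ∈ Ioo 0 x ∧ besselJ μ t = 0}.encard) : j' < x := by
  by_contra! hx
  have hsub : {t | t ∈ Ioo 0 x ∧ besselJ μ t = 0} ⊆ {t | t ∈ Ioo 0 j' ∧ besselJ μ t = 0} :=
    fun t ht => ⟨⟨ht.1.1, ht.1.2.trans_le hx⟩, ht.2⟩
  have hcard := hle.trans (encard_le_encard hsub)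
  rw [hj.encard_zeros_Ioc, hj'.2.2] at hcard
  exact absurd hcard (by exact_mod_cast (Nat.lt_succ_self (k - 1)).not_ge)

lemma unique (hj : IsKthBesselZero ν k j) (hj' : IsKthBesselZero ν k j') : j = j' := by
  by_contra hne
  wlog hlt : j < j' generalizing j j'
  · exact this hj' hj (Ne.symm hne) ((not_lt.1 hlt).lt_of_ne (Ne.symm hne))
  · exact lt_irrefl j' (hj.lt_of_encard_zeros_le hj' (encard_le_encard fun t ht =>
      ⟨⟨ht.1.1, ht.1.2.trans_lt hlt⟩, ht.2⟩))

lemma lt_of_potential_lt {q p d : ℝ} (hν : 0 ≤ ν) (hμ : 0 ≤ μ) (hq : 0 < q) (hp : 0 < p)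
    (hd : 0 < d) (hj : IsKthBesselZero ν k j) (hj' : IsKthBesselZero μ k j')
    (hQ : ∀ t < 0, q ^ 2 * ((j * exp (q * t)) ^ 2 - ν ^ 2)
      < p ^ 2 * ((d * exp (p * t)) ^ 2 - μ ^ 2)) : j' < d := by
  have hj0 := hj.1
  have hfin : {t | t < 0 ∧ besselJ ν (j * exp (q * t)) = 0}.Finite :=
    finite_of_encard_eq_coe ((encard_zeros_Iio_besselJ_comp_exp ν hj0 hq).trans hj.2.2)
  have hle := (isSturmSolution_besselJ_comp_exp ν q hj0).encard_zeros_Iic_le_encard_zeros_Iio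
    (isSturmSolution_besselJ_comp_exp μ p hd) hQ
    (tendsto_wronskian_besselJ_comp_exp_atBot hμ hν hp hq hd hj0)
    (by simpa only [exp_zero] using hfin)
  rw [encard_zeros_Iic_besselJ_comp_exp ν hj0 hq, encard_zeros_Iio_besselJ_comp_exp μ hd hp] at hle
  exact hj.lt_of_encard_zeros_le hj' hle

theorem lt_of_order_lt (hμ : 0 ≤ μ) (hμν : μ < ν) (hj : IsKthBesselZero ν k j)
    (hj' : IsKthBesselZero μ k j') : j' < j :=
  hj.lt_of_potential_lt (hμ.trans hμν.le) hμ one_pos one_pos hj.1 hj' fun t _ => by gcongr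

theorem div_order_lt_of_order_lt (hμ : 0 < μ) (hμν : μ < ν) (hj : IsKthBesselZero ν k j)
    (hj' : IsKthBesselZero μ k j') : j / ν < j' / μ := by
  have hν := hμ.trans hμν
  have hj'0 := hj'.1
  rw [div_lt_iff₀' hν]
  refine hj'.lt_of_potential_lt hμ.le hν.le (inv_pos.2 hμ) (inv_pos.2 hν) (by positivity) hj
    fun t ht => ?_
  have hexp : exp (μ⁻¹ * t) < exp (ν⁻¹ * t) :=
    exp_lt_exp.2 (mul_lt_mul_of_neg_right (inv_strictAnti₀ hμ hμν) ht)
  calc μ⁻¹ ^ 2 * ((j' * exp (μ⁻¹ * t)) ^ 2 - μ ^ 2)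
      = (j' / μ * exp (μ⁻¹ * t)) ^ 2 - 1 := by field
    _ < (j' / μ * exp (ν⁻¹ * t)) ^ 2 - 1 := by gcongr
    _ = ν⁻¹ ^ 2 * ((ν * (j' / μ) * exp (ν⁻¹ * t)) ^ 2 - ν ^ 2) := by field

theorem div_order_mem_uIcc (hν : 0 < ν) (hμ : 0 < μ) (hj : IsKthBesselZero ν k j)
    (hj' : IsKthBesselZero μ k j') : j / ν ∈ uIcc (j' / ν) (j' / μ) := by
  rcases lt_trichotomy μ ν with h | rfl | h
  · have hlt := hj.lt_of_order_lt hμ.le h hj'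
    exact Icc_subset_uIcc ⟨by gcongr, (hj.div_order_lt_of_order_lt hμ h hj').le⟩
  · rw [hj.unique hj']
    exact left_mem_uIcc
  · have hlt := hj'.lt_of_order_lt hν.le h hj
    exact Icc_subset_uIcc' ⟨(hj'.div_order_lt_of_order_lt hν h hj).le, by gcongr⟩

end IsKthBesselZero

theorem stmt_12_general {ι : Type*} {l : Filter ι} {ν μ : ι → ℝ} (hμ : ∀ᶠ i in l, 0 < μ i)
    (hlim : Tendsto (fun i => ν i / μ i) l (nhds 1)) {ε : ℝ} (hε : 0 < ε) :
    ∀ᶠ i in l, ∀ (k : ℕ) (j j' : ℝ), IsKthBesselZero (ν i) k j → IsKthBesselZero (μ i) k j' →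
      (1 - ε) * j' / μ i < j / ν i ∧ j / ν i < (1 + ε) * j' / μ i := by
  have hlim' : Tendsto (fun i => μ i / ν i) l (nhds 1) := by
    simpa only [inv_div, inv_one] using hlim.inv₀ one_ne_zero
  filter_upwards [hμ, hlim.eventually_const_lt one_pos,
    hlim'.eventually_const_lt (sub_lt_self 1 hε),
    hlim'.eventually_lt_const (lt_add_of_pos_right 1 hε)]
    with i hμ hratio hlower hupper k j j' hj hj'
  have hν : 0 < ν i := (div_pos_iff_of_pos_right hμ).1 hratio
  have hj'0 : 0 < j' / μ i := div_pos hj'.1 hμ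
  have hscale : j' / ν i = μ i / ν i * (j' / μ i) := by field
  have hmemν : j' / ν i ∈ Ioo ((1 - ε) * j' / μ i) ((1 + ε) * j' / μ i) := by
    rw [hscale, mul_div_assoc, mul_div_assoc]
    exact ⟨by gcongr, by gcongr⟩
  have hmemμ : j' / μ i ∈ Ioo ((1 - ε) * j' / μ i) ((1 + ε) * j' / μ i) := by
    rw [mul_div_assoc, mul_div_assoc]
    exact ⟨mul_lt_of_lt_one_left hj'0 (sub_lt_self 1 hε),
      lt_mul_of_one_lt_left hj'0 (lt_add_of_pos_right 1 hε)⟩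
  exact ordConnected_Ioo.uIcc_subset hmemν hmemμ (hj.div_order_mem_uIcc hν hμ hj')

theorem stmt_12 (σ : ℝ) (hσ : 0 < σ) (ℓ k : ℕ → ℕ)
    (hℓpos : ∀ i, 0 < ℓ i) (hkpos : ∀ i, 0 < k i)
    (hℓmono : StrictMono ℓ) (hkmono : StrictMono k)
    (hlim : Tendsto (fun i => (ℓ i : ℝ) / (k i : ℝ)) atTop (nhds σ)) :
    ∀ ε : ℝ, 0 < ε → ∃ i₀ : ℕ, ∀ i : ℕ, i₀ ≤ i → ∀ j j' : ℝ,
      IsKthBesselZero (ℓ i) (k i) j → IsKthBesselZero (σ * k i) (k i) j' →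
        (1 - ε) * j' / (σ * k i) < j / ℓ i ∧ j / ℓ i < (1 + ε) * j' / (σ * k i) := by
  have hpos (i : ℕ) : 0 < σ * k i := mul_pos hσ (Nat.cast_pos.2 (hkpos i))
  have hratio : Tendsto (fun i => (ℓ i : ℝ) / (σ * k i)) atTop (nhds 1) := by
    simpa only [div_div, mul_comm, div_self hσ.ne'] using hlim.div_const σ
  intro ε hε
  obtain ⟨i₀, hi₀⟩ := eventually_atTop.1 (stmt_12_general (.of_forall hpos) hratio hε)
  exact ⟨i₀, fun i hi => hi₀ i hi (k i)⟩
end
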